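/- Let A be a Hermitian positive definite complex s×s matrix. Then for every z ∈ ℂˢ, ∫_{ℂˢ} exp(−2i·Im(z*w)) · exp(−w*Aw) d²ˢw/πˢ = det(A)⁻¹ · exp(−z*A⁻¹z). -/

import Mathlib

open MeasureTheory Matrix
open scoped ComplexOrder ENNReal

/-- The reference measure `μ(d²ˢw) = d²ˢw / πˢ` on `ℂˢ ≅ ℝ²ˢ`:
Lebesgue measure divided by `πˢ`. -/
noncomputable def gmeasure (s : ℕ) : Measure (Fin s → ℂ) :=
  (ENNReal.ofReal Real.pi ^ s)⁻¹ • (volume : Measure (Fin s → ℂ))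

theorem aux_one (y : ℂ) : ∫ v : ℂ, Complex.exp (-(2 * Complex.I * ((star y * v).im : ℂ)) - star v * v)
    = Real.pi * Complex.exp (-(star y * y)) := by
  have h := GaussianFourier.integral_cexp_neg_mul_sq_norm_add (V := ℂ) (b := 1) (by simp)
    (-2 * Complex.I) (Complex.I * y)
  have h1 : ∀ v : ℂ, (starRingEnd ℂ) v * v = ((‖v‖ : ℂ)) ^ 2 := fun v => Complex.conj_mul' v
  convert h using 1
  · congr 1
    ext v
    congr 1
    simp only [Complex.star_def, h1]
    have : inner ℝ (Complex.I * y) v = ((starRingEnd ℂ) y * v).im := by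
      simp [Complex.inner]
      ring
    rw [this]
    ring
  · simp only [Complex.star_def, h1]
    simp [mul_pow]
    ring_nf

theorem aux_prod {s : ℕ} (y : Fin s → ℂ) :
    ∫ v : Fin s → ℂ, Complex.exp (-(2 * Complex.I * ((star y ⬝ᵥ v).im : ℂ)) - star v ⬝ᵥ v)
    = Real.pi ^ s * Complex.exp (-(star y ⬝ᵥ y)) := by
  have h : ∀ v : Fin s → ℂ,
      Complex.exp (-(2 * Complex.I * ((star y ⬝ᵥ v).im : ℂ)) - star v ⬝ᵥ v)
      = ∏ i, Complex.exp (-(2 * Complex.I * ((star (y i) * v i).im : ℂ)) - star (v i) * v i) := by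
    intro v
    rw [← Complex.exp_sum]
    simp only [dotProduct, Complex.im_sum, Complex.ofReal_sum, Finset.mul_sum, Pi.star_apply,
      Finset.sum_sub_distrib, Finset.sum_neg_distrib]
  simp_rw [h]
  rw [integral_fintype_prod_volume_eq_prod (f := fun i (v : ℂ) =>
    Complex.exp (-(2 * Complex.I * ((star (y i) * v).im : ℂ)) - star v * v))]
  simp_rw [aux_one, Finset.prod_mul_distrib, ← Complex.exp_sum]
  simp [dotProduct]

theorem aux_cov {s : ℕ} (B : Matrix (Fin s) (Fin s) ℂ) (hB : B.det ≠ 0)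
    (g : (Fin s → ℂ) → ℂ) (hg : Continuous g) :
    ∫ w, g (B.mulVec w) = ((‖B.det‖ ^ 2)⁻¹ : ℝ) * ∫ v, g v := by
  let f : (Fin s → ℂ) →ₗ[ℝ] (Fin s → ℂ) := (Matrix.toLin' B).restrictScalars ℝ
  have hdet : LinearMap.det f = ‖B.det‖ ^ 2 := by
    rw [LinearMap.det_restrictScalars, LinearMap.det_toLin', Algebra.norm_complex_apply,
      Complex.normSq_eq_norm_sq]
  have hne : LinearMap.det f ≠ 0 := by rw [hdet]; positivity
  have hm := Measure.map_linearMap_addHaar_eq_smul_addHaar (volume : Measure (Fin s → ℂ)) hne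
  have hfc : Continuous f := f.continuous_of_finiteDimensional
  have := integral_map (μ := (volume : Measure (Fin s → ℂ))) hfc.measurable.aemeasurable
    (f := g) hg.aestronglyMeasurable
  rw [hm, integral_smul_measure, hdet] at this
  change ∫ w, g (f w) = _
  rw [← this, ENNReal.toReal_ofReal (abs_nonneg _), abs_of_nonneg (by positivity)]
  simp

/-- Let `A` be a Hermitian positive definite complex `s × s` matrix.  Then for
every `z ∈ ℂˢ`,
`∫ exp(−2i Im(z*w)) exp(−w*Aw) d²ˢw/πˢ = det(A)⁻¹ exp(−z*A⁻¹z)`. -/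
theorem stmt7 {s : ℕ} (A : Matrix (Fin s) (Fin s) ℂ) (hA : A.PosDef)
    (z : Fin s → ℂ) :
    ∫ w : Fin s → ℂ,
        Complex.exp (-(2 * Complex.I * ((star z ⬝ᵥ w).im : ℂ)))
          * Complex.exp (-(star w ⬝ᵥ A.mulVec w)) ∂(gmeasure s)
      = A.det⁻¹ * Complex.exp (-(star z ⬝ᵥ A⁻¹.mulVec z)) := by
  have hdA : A.det ≠ 0 := hA.det_pos.ne'
  obtain ⟨B, hB⟩ : ∃ B : Matrix (Fin s) (Fin s) ℂ, A = Bᴴ * B := by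
    open scoped MatrixOrder in
    exact (CStarAlgebra.nonneg_iff_eq_star_mul_self).1
      (Matrix.nonneg_iff_posSemidef.2 hA.posSemidef)
  have hdet : A.det = ((‖B.det‖ ^ 2 : ℝ) : ℂ) := by
    rw [hB, det_mul, det_conjTranspose, Complex.star_def, Complex.conj_mul']
    push_cast; rfl
  have hdB : B.det ≠ 0 := by
    intro h; apply hdA; rw [hdet, h]; simp
  have hu : IsUnit B.det := isUnit_iff_ne_zero.2 hdB
  set y : Fin s → ℂ := (B⁻¹)ᴴ.mulVec z with hy
  have hsy : star y = star z ᵥ* B⁻¹ := by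
    rw [hy, star_mulVec, conjTranspose_conjTranspose]
  have hzy : star z ⬝ᵥ A⁻¹.mulVec z = star y ⬝ᵥ y := by
    rw [hsy, ← dotProduct_mulVec, hy, mulVec_mulVec, hB, Matrix.mul_inv_rev,
      conjTranspose_nonsing_inv]
  have hint : ∀ w : Fin s → ℂ, Complex.exp (-(2 * Complex.I * ((star z ⬝ᵥ w).im : ℂ)))
          * Complex.exp (-(star w ⬝ᵥ A.mulVec w)) =
      (fun v => Complex.exp (-(2 * Complex.I * ((star y ⬝ᵥ v).im : ℂ)) - star v ⬝ᵥ v))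
        (B.mulVec w) := by
    intro w
    have e1 : star y ⬝ᵥ B.mulVec w = star z ⬝ᵥ w := by
      rw [hsy, ← dotProduct_mulVec, mulVec_mulVec, nonsing_inv_mul _ hu, one_mulVec]
    have e2 : star (B.mulVec w) ⬝ᵥ B.mulVec w = star w ⬝ᵥ A.mulVec w := by
      rw [star_mulVec, ← dotProduct_mulVec, mulVec_mulVec, hB]
    simp only [e1, e2]
    rw [← Complex.exp_add, sub_eq_add_neg]
  have hcont : Continuous (fun v : Fin s → ℂ =>
      Complex.exp (-(2 * Complex.I * ((star y ⬝ᵥ v).im : ℂ)) - star v ⬝ᵥ v)) := by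
    unfold dotProduct
    fun_prop
  rw [integral_congr_ae (Filter.Eventually.of_forall hint)]
  rw [gmeasure, integral_smul_measure, aux_cov B hdB
    (fun v => Complex.exp (-(2 * Complex.I * ((star y ⬝ᵥ v).im : ℂ)) - star v ⬝ᵥ v)) hcont, aux_prod, hzy, hdet]
  have hpi : (Real.pi : ℂ) ≠ 0 := by exact_mod_cast Real.pi_ne_zero
  rw [ENNReal.toReal_inv, ENNReal.toReal_pow, ENNReal.toReal_ofReal Real.pi_pos.le,
    Complex.real_smul]
  push_cast
  field_simp
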